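/- Let T ⊆ ℝⁿ be a compact set. If for every u ∈ ∂_cT there exists δ > 0 such that conv(T ∩ B̄(u, δ)) is SDP representable, then conv(T) is SDP representable, where B̄(u, δ) = {x ∈ ℝⁿ : ‖x − u‖ ≤ δ}. -/

import Mathlib

open MvPolynomial Metric Set Pointwise Filter

noncomputable section

/-- `ℝⁿ` with the Euclidean norm. -/
abbrev Rn (n : ℕ) : Type := EuclideanSpace ℝ (Fin n)

/-- A set `S ⊆ ℝⁿ` is SDP representable if it is the projection of a spectrahedron:
there are symmetric matrices `A₀, A i, B j` with
`S = { x | ∃ u, A₀ + Σ xᵢ Aᵢ + Σ uⱼ Bⱼ ⪰ 0 }`. -/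
def IsSDPRepresentable {n : ℕ} (S : Set (Rn n)) : Prop :=
  ∃ (N d : ℕ) (A₀ : Matrix (Fin d) (Fin d) ℝ)
    (A : Fin n → Matrix (Fin d) (Fin d) ℝ) (B : Fin N → Matrix (Fin d) (Fin d) ℝ),
    A₀.IsSymm ∧ (∀ i, (A i).IsSymm) ∧ (∀ j, (B j).IsSymm) ∧
    S = {x : Rn n | ∃ u : Fin N → ℝ,
      (A₀ + ∑ i, x i • A i + ∑ j, u j • B j).PosSemidef}

/-- Evaluation of a polynomial at a point of `ℝⁿ`. -/
def peval {n : ℕ} (g : MvPolynomial (Fin n) ℝ) (x : Rn n) : ℝ :=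
  MvPolynomial.eval (fun i => x i) g

/-- The gradient `∇g(u)` of a polynomial. -/
def pgrad {n : ℕ} (g : MvPolynomial (Fin n) ℝ) (u : Rn n) : Fin n → ℝ :=
  fun i => MvPolynomial.eval (fun j => u j) (MvPolynomial.pderiv i g)

/-- The Hessian `∇²g(u)` of a polynomial. -/
def phess {n : ℕ} (g : MvPolynomial (Fin n) ℝ) (u : Rn n) : Matrix (Fin n) (Fin n) ℝ :=
  Matrix.of fun i j =>
    MvPolynomial.eval (fun k => u k) (MvPolynomial.pderiv i (MvPolynomial.pderiv j g))

/-- A polynomial `g` is sos-concave if `-∇²g(x) = W(x)ᵀ W(x)` for some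
(possibly nonsquare) matrix polynomial `W`. -/
def SosConcave {n : ℕ} (g : MvPolynomial (Fin n) ℝ) : Prop :=
  ∃ (k : ℕ) (W : Fin k → Fin n → MvPolynomial (Fin n) ℝ),
    ∀ i j, - MvPolynomial.pderiv i (MvPolynomial.pderiv j g) = ∑ l, W l i * W l j

/-- `g` is quasi-concave at `u` : `-vᵀ∇²g(u)v ≥ 0` for every `v` with `∇g(u)ᵀv = 0`. -/
def QuasiConcaveAt {n : ℕ} (g : MvPolynomial (Fin n) ℝ) (u : Rn n) : Prop :=
  ∀ v : Fin n → ℝ, (∑ i, pgrad g u i * v i) = 0 →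
    0 ≤ -(∑ i, ∑ j, v i * phess g u i j * v j)

/-- `g` is strictly quasi-concave at `u` : if `∇g(u) ≠ 0` then `-vᵀ∇²g(u)v > 0`
for all nonzero `v ⊥ ∇g(u)`; if `∇g(u) = 0` then `-∇²g(u)` is positive definite. -/
def StrictlyQuasiConcaveAt {n : ℕ} (g : MvPolynomial (Fin n) ℝ) (u : Rn n) : Prop :=
  (pgrad g u ≠ 0 ∧ ∀ v : Fin n → ℝ, v ≠ 0 → (∑ i, pgrad g u i * v i) = 0 →
      0 < -(∑ i, ∑ j, v i * phess g u i j * v j)) ∨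
  (pgrad g u = 0 ∧ (-(phess g u)).PosDef)

/-- The convex boundary `∂_c T` : points of `T` minimizing some unit linear functional. -/
def convexBoundary {n : ℕ} (T : Set (Rn n)) : Set (Rn n) :=
  {u ∈ T | ∃ l : Rn n, ‖l‖ = 1 ∧ ∀ x ∈ T, (∑ i, l i * u i) ≤ ∑ i, l i * x i}

/-- `v` is a nonsingular point of `∂T` (w.r.t. defining polynomials `g`):
exactly one defining polynomial vanishes at `v`, with nonvanishing gradient. -/
def IsNonsingularBoundaryPoint {n m : ℕ} (g : Fin m → MvPolynomial (Fin n) ℝ)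
    (T : Set (Rn n)) (v : Rn n) : Prop :=
  v ∈ frontier T ∧ ∃ i, peval (g i) v = 0 ∧ pgrad (g i) v ≠ 0 ∧
    ∀ j, peval (g j) v = 0 → j = i

/-- A polynomial is SOS if it is a finite sum of squares of polynomials. -/
def IsSOSPoly {n : ℕ} (p : MvPolynomial (Fin n) ℝ) : Prop :=
  ∃ (k : ℕ) (q : Fin k → MvPolynomial (Fin n) ℝ), p = ∑ i, (q i) ^ 2

/-- The polynomial `δ² - ‖x - u‖²`. -/
def ballPoly {n : ℕ} (u : Rn n) (δ : ℝ) : MvPolynomial (Fin n) ℝ :=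
  MvPolynomial.C (δ ^ 2) - ∑ i, (MvPolynomial.X i - MvPolynomial.C (u i)) ^ 2

/-- The family `h₁, …, h_{m₂}` extended by the ball polynomial `h_m(x) = δ² - ‖x-u‖²`. -/
def extFamily {n m2 : ℕ} (h : Fin m2 → MvPolynomial (Fin n) ℝ) (u : Rn n) (δ : ℝ) :
    Fin (m2 + 1) → MvPolynomial (Fin n) ℝ :=
  Fin.snoc h (ballPoly u δ)

/-- The positive definite Lagrange Hessian (PDLH) condition at `u` with radius `δu`,
for the set `T = {x | f(x) = 0, h(x) ≥ 0}`. -/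
def PDLHAt {n m1 m2 : ℕ} (f : Fin m1 → MvPolynomial (Fin n) ℝ)
    (h : Fin m2 → MvPolynomial (Fin n) ℝ) (T : Set (Rn n)) (u : Rn n) (δu : ℝ) : Prop :=
  ∀ l : Rn n, ‖l‖ = 1 → ∀ δ : ℝ, 0 < δ → δ ≤ δu →
    ∀ v ∈ T ∩ closedBall u δ,
      (∀ x ∈ T ∩ closedBall u δ, (∑ i, l i * v i) ≤ ∑ i, l i * x i) →
      ∃ (lam : Fin m1 → ℝ) (mu : Fin (m2 + 1) → ℝ),
        (∀ j, 0 ≤ mu j) ∧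
        (∀ j, mu j * peval (extFamily h u δ j) v = 0) ∧
        (∀ i, l i = (∑ k, lam k * pgrad (f k) v i) +
            ∑ j, mu j * pgrad (extFamily h u δ j) v i) ∧
        ∀ x ∈ closedBall u δ,
          (Matrix.of (fun i i' : Fin n =>
            -(∑ k, lam k * phess (f k) x i i') -
              ∑ j, mu j * phess (extFamily h u δ j) x i i')).PosDef

/-- `Z(g) ∩ ∂S` has strictly convex shape with respect to `S`. -/
def StrictlyConvexShape {n : ℕ} (g : MvPolynomial (Fin n) ℝ) (S : Set (Rn n)) : Prop :=
  ∃ Y U : Set (Rn n), IsOpen U ∧ Y = {x | peval g x = 0} ∩ U ∧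
    {x | peval g x = 0} ∩ frontier S ⊆ Y ∧
    (∀ p ∈ closure Y, pgrad g p ≠ 0) ∧
    ∀ p ∈ closure Y,
      (∃ ε : ℝ, (ε = 1 ∨ ε = -1) ∧
        ∀ q ∈ S ∪ closure Y, ε * (∑ i, pgrad g p i * (q i - p i)) ≤ 0) ∧
      ∀ q ∈ S ∪ closure Y, (∑ i, pgrad g p i * (q i - p i)) = 0 → q = p

/-! Every nonzero linear functional attains its minimum over `T` on `∂_c T`, so Hahn-Banach
separation gives `conv T = conv (∂_c T)`. By compactness finitely many of the given neighbourhoods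
cover `∂_c T`, hence `conv T` is the convex hull of a finite union of sets with bounded, SDP
representable hulls.

For nonempty convex `S` and `T`, membership `x ∈ conv (S ∪ T)` means `x = y + z` with `(a, y)` in
the cone over `S` and `(1 - a, z)` in the cone over `T`. Homogenizing a pencil for `S` represents
the cone over `S`: at height `a > 0` by rescaling, and at `a = 0` because a recession direction of a
bounded set is zero. -/

open scoped Topology

section SpectrahedralShadow

variable {E F : Type*} [AddCommGroup E] [Module ℝ E] [AddCommGroup F] [Module ℝ F]

/-- A spectrahedral shadow in a real vector space `E`: the projection to `E` of a spectrahedron in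
`E × ℝᴺ`. This is the coordinate-free form of `IsSDPRepresentable`, with the linear matrix pencil
encoded as an affine map into symmetric matrices. -/
def IsSpectrahedralShadow (S : Set E) : Prop :=
  ∃ (N d : ℕ) (M : E × (Fin N → ℝ) →ᵃ[ℝ] Matrix (Fin d) (Fin d) ℝ),
    (∀ p, (M p).IsSymm) ∧ S = {x | ∃ u, (M (x, u)).PosSemidef}

theorem isSpectrahedralShadow_setOf_exists_posSemidef {W d : Type*} [AddCommGroup W] [Module ℝ W]
    [FiniteDimensional ℝ W] [Finite d] (M : E × W →ᵃ[ℝ] Matrix d d ℝ) (hM : ∀ p, (M p).IsSymm) :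
    IsSpectrahedralShadow {x | ∃ w, (M (x, w)).PosSemidef} := by
  have := Fintype.ofFinite d
  let b := (Module.finBasis ℝ W).equivFun
  let e := Fintype.equivFin d
  refine ⟨_, _, (Matrix.reindexLinearEquiv ℝ ℝ e e).toLinearMap.toAffineMap.comp
    (M.comp ((AffineMap.id ℝ E).prodMap b.symm.toLinearMap.toAffineMap)),
    fun p => (hM _).submatrix _, ?_⟩
  ext x
  exact b.symm.surjective.exists.trans
    (exists_congr fun _ => (Matrix.posSemidef_submatrix_equiv e.symm).symm)

theorem isSymm_linear_of_forall_isSymm {d : Type*} {M : E →ᵃ[ℝ] Matrix d d ℝ}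
    (hM : ∀ p, (M p).IsSymm) (v : E) : (M.linear v).IsSymm := by
  rw [M.decomp']
  exact (hM v).sub (hM 0)

theorem isSDPRepresentable_iff_isSpectrahedralShadow {n : ℕ} {S : Set (Rn n)} :
    IsSDPRepresentable S ↔ IsSpectrahedralShadow S := by
  constructor
  · rintro ⟨N, d, A₀, A, B, hA₀, hA, hB, rfl⟩
    let L := (Fintype.linearCombination ℝ A ∘ₗ
      (WithLp.linearEquiv 2 ℝ (Fin n → ℝ)).toLinearMap).coprod (Fintype.linearCombination ℝ B)
    have hL : ∀ x u, L (x, u) = ∑ i, x i • A i + ∑ j, u j • B j := fun _ _ => rfl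
    refine ⟨N, d, AffineMap.const ℝ _ A₀ + L.toAffineMap, fun ⟨x, u⟩ => ?_, ?_⟩
    · simp [hL, Matrix.IsSymm, Matrix.transpose_sum, hA₀.eq, (hA _).eq, (hB _).eq]
    · simp [hL, add_assoc]
  · rintro ⟨N, d, M, hM, rfl⟩
    have hlin := isSymm_linear_of_forall_isSymm hM
    refine ⟨N, d, M 0, fun i => M.linear (EuclideanSpace.single i 1, 0),
      fun j => M.linear (0, Pi.single j 1), hM 0, fun _ => hlin _, fun _ => hlin _, ?_⟩
    have hM_eq (x : Rn n) (u : Fin N → ℝ) :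
        M (x, u) = M 0 + ∑ i, x i • M.linear (EuclideanSpace.single i 1, 0) +
          ∑ j, u j • M.linear (0, Pi.single j 1) := by
      have hbasis : (x, u) = ∑ i, x i • (EuclideanSpace.single i (1 : ℝ), (0 : Fin N → ℝ)) +
          ∑ j, u j • ((0 : Rn n), Pi.single j (1 : ℝ)) := by
        ext k <;> simp [Prod.fst_sum, Prod.snd_sum, Finset.sum_apply, Pi.single_apply]
      calc M (x, u) = M 0 + M.linear (x, u) := by
            rw [add_comm]
            exact congrFun M.decomp (x, u)
        _ = _ := by rw [hbasis]; simp only [map_add, map_sum, map_smul, add_assoc]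
    ext x
    exact exists_congr fun u => by rw [hM_eq]

namespace IsSpectrahedralShadow

theorem convex {S : Set E} (hS : IsSpectrahedralShadow S) : Convex ℝ S := by
  obtain ⟨N, d, M, -, rfl⟩ := hS
  rintro x ⟨u, hu⟩ y ⟨v, hv⟩ a b ha hb hab
  refine ⟨a • u + b • v, ?_⟩
  have hcombo : M (a • x + b • y, a • u + b • v) = a • M (x, u) + b • M (y, v) :=
    Convex.combo_affine_apply (x := (x, u)) (y := (y, v)) hab
  rw [hcombo]
  exact (hu.smul ha).add (hv.smul hb)

theorem preimage {S : Set F} (hS : IsSpectrahedralShadow S) (f : E →ᵃ[ℝ] F) :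
    IsSpectrahedralShadow (f ⁻¹' S) := by
  obtain ⟨N, d, M, hM, rfl⟩ := hS
  exact ⟨N, d, M.comp (f.prodMap (AffineMap.id ℝ _)), fun p => hM _, rfl⟩

theorem image_fst [FiniteDimensional ℝ F] {S : Set (E × F)} (hS : IsSpectrahedralShadow S) :
    IsSpectrahedralShadow (Prod.fst '' S) := by
  obtain ⟨N, d, M, hM, rfl⟩ := hS
  convert isSpectrahedralShadow_setOf_exists_posSemidef
    (M.comp (LinearEquiv.prodAssoc ℝ E F (Fin N → ℝ)).symm.toLinearMap.toAffineMap)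
    (fun p => hM _) using 1
  ext x
  simp only [mem_image, Prod.exists, exists_and_right, exists_eq_right]
  rfl

end IsSpectrahedralShadow

theorem posSemidef_fromBlocks_zero_iff {m k : Type*} [Finite m] [Finite k]
    {A : Matrix m m ℝ} {D : Matrix k k ℝ} :
    (Matrix.fromBlocks A 0 0 D).PosSemidef ↔ A.PosSemidef ∧ D.PosSemidef := by
  refine ⟨fun h => ⟨h.submatrix Sum.inl, h.submatrix Sum.inr⟩, fun ⟨hA, hD⟩ => ?_⟩
  have := Fintype.ofFinite m
  have := Fintype.ofFinite k
  refine .of_dotProduct_mulVec_nonneg (hA.1.fromBlocks (by simp) hD.1) fun x => ?_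
  rw [Matrix.fromBlocks_mulVec]
  simpa [dotProduct, Fintype.sum_sum_type] using
    add_nonneg (hA.dotProduct_mulVec_nonneg (x ∘ Sum.inl))
      (hD.dotProduct_mulVec_nonneg (x ∘ Sum.inr))

/-- The block diagonal embedding of pairs of matrices, as a linear map, so that composing it with
two matrix pencils gives again a pencil. -/
def blockDiagonalLinearMap (m k : Type*) :
    Matrix m m ℝ × Matrix k k ℝ →ₗ[ℝ] Matrix (m ⊕ k) (m ⊕ k) ℝ where
  toFun p := Matrix.fromBlocks p.1 0 0 p.2
  map_add' p q := by simp [Matrix.fromBlocks_add]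
  map_smul' c p := by simp [Matrix.fromBlocks_smul]

theorem IsSpectrahedralShadow.inter {S T : Set E} (hS : IsSpectrahedralShadow S)
    (hT : IsSpectrahedralShadow T) : IsSpectrahedralShadow (S ∩ T) := by
  obtain ⟨N, d, M, hM, rfl⟩ := hS
  obtain ⟨N', d', M', hM', rfl⟩ := hT
  let toLeft : E × (Fin N → ℝ) × (Fin N' → ℝ) →ᵃ[ℝ] E × (Fin N → ℝ) :=
    (LinearMap.id.prodMap (LinearMap.fst ℝ _ _)).toAffineMap
  let toRight : E × (Fin N → ℝ) × (Fin N' → ℝ) →ᵃ[ℝ] E × (Fin N' → ℝ) :=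
    (LinearMap.id.prodMap (LinearMap.snd ℝ _ _)).toAffineMap
  convert isSpectrahedralShadow_setOf_exists_posSemidef
    ((blockDiagonalLinearMap _ _).toAffineMap.comp ((M.comp toLeft).prod (M'.comp toRight)))
    (fun p => (hM _).fromBlocks (by simp) (hM' _)) using 1
  ext x
  simp [blockDiagonalLinearMap, posSemidef_fromBlocks_zero_iff, toLeft, toRight]

theorem isSpectrahedralShadow_halfSpace (f : E →ᵃ[ℝ] ℝ) :
    IsSpectrahedralShadow {x | 0 ≤ f x} := by
  convert isSpectrahedralShadow_setOf_exists_posSemidef (W := Unit)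
    ((Matrix.diagonalLinearMap Unit ℝ ℝ ∘ₗ LinearMap.pi fun _ => LinearMap.id).toAffineMap.comp
      (f.comp AffineMap.fst)) (fun p => Matrix.isSymm_diagonal _) using 1
  ext x
  simp [Matrix.posSemidef_diagonal_iff]

theorem isSpectrahedralShadow_empty : IsSpectrahedralShadow (∅ : Set E) := by
  convert isSpectrahedralShadow_halfSpace (AffineMap.const ℝ E (-1 : ℝ)) using 1
  ext x
  norm_num

theorem isSpectrahedralShadow_univ : IsSpectrahedralShadow (univ : Set E) := by
  simpa using isSpectrahedralShadow_halfSpace (AffineMap.const ℝ E (0 : ℝ))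

/-- The homogenization of an affine map `M`: the linear map `(a, x) ↦ a • M (a⁻¹ • x)`, extended to
`a = 0` by the linear part of `M`. -/
def affineHomogenization (M : E →ᵃ[ℝ] F) : ℝ × E →ₗ[ℝ] F :=
  (LinearMap.fst ℝ ℝ E).smulRight (M 0) + M.linear ∘ₗ LinearMap.snd ℝ ℝ E

theorem affineHomogenization_zero_left (M : E →ᵃ[ℝ] F) (v : E) :
    affineHomogenization M (0, v) = M.linear v := by
  simp [affineHomogenization]

theorem affineHomogenization_smul (M : E →ᵃ[ℝ] F) (a : ℝ) (x : E) :
    affineHomogenization M (a, a • x) = a • M x := by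
  rw [congrFun M.decomp x]
  simp [affineHomogenization, add_comm]

/-- The cone over `S` placed at height `1`: the pairs `(a, x)` with `a ≥ 0` and `x ∈ a • S`.
Its slice at height `0` is `{0}` for nonempty `S`, so it is not closed for general unbounded `S`. -/
def homogenizedCone (S : Set E) : Set (ℝ × E) := {p | 0 ≤ p.1 ∧ p.2 ∈ p.1 • S}

theorem convexJoin_eq_image_fst_homogenizedCone (S T : Set E) :
    convexJoin ℝ S T = Prod.fst '' {p : E × ℝ × E |
      p.2 ∈ homogenizedCone S ∧ (1 - p.2.1, p.1 - p.2.2) ∈ homogenizedCone T} := by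
  ext x
  rw [mem_convexJoin]
  constructor
  · rintro ⟨y, hy, z, hz, a, b, ha, hb, hab, rfl⟩
    obtain rfl : b = 1 - a := by linarith
    exact ⟨(_, a, a • y), ⟨⟨ha, smul_mem_smul_set hy⟩,
      hb, z, hz, (add_sub_cancel_left _ _).symm⟩, rfl⟩
  · rintro ⟨⟨x, a, y'⟩, ⟨⟨ha, y, hy, hay⟩, hb, z, hz, hzx⟩, rfl⟩
    obtain rfl : a • y = y' := hay
    exact ⟨y, hy, z, hz, a, 1 - a, ha, hb, add_sub_cancel _ _, eq_sub_iff_add_eq'.1 hzx⟩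

end SpectrahedralShadow

section Normed

variable {E : Type*} [NormedAddCommGroup E] [NormedSpace ℝ E]

theorem eq_zero_of_forall_add_smul_mem {S : Set E}
    (hS : Bornology.IsBounded S) {x v : E} (h : ∀ t : ℝ, 0 ≤ t → t • v + x ∈ S) : v = 0 := by
  refine asymptoticCone_subset_singleton_of_bounded hS ?_
  have hlim := (tendsto_id (α := ℝ) (x := atTop)).atTop_smul_const_tendsto_asymptoticNhds v
    |>.asymptoticNhds_vadd_const x
  exact hlim.frequently ((eventually_ge_atTop 0).mono h).frequently

section Pencil

variable {W d : Type*} [AddCommGroup W] [Module ℝ W] {M : E × W →ᵃ[ℝ] Matrix d d ℝ}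

theorem eq_zero_of_linear_posSemidef (hb : Bornology.IsBounded {x | ∃ w, (M (x, w)).PosSemidef})
    (hne : {x | ∃ w, (M (x, w)).PosSemidef}.Nonempty) {v : E} {w : W}
    (h : (M.linear (v, w)).PosSemidef) : v = 0 := by
  obtain ⟨x, w₀, hx⟩ := hne
  refine eq_zero_of_forall_add_smul_mem hb (x := x) fun t ht => ⟨t • w + w₀, ?_⟩
  have hray : M (t • v + x, t • w + w₀) = t • M.linear (v, w) + M (x, w₀) := by
    rw [← map_smul]
    exact M.map_vadd (x, w₀) (t • (v, w))
  rw [hray]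
  exact (h.smul ht).add hx

theorem mem_homogenizedCone_iff_exists_posSemidef
    (hb : Bornology.IsBounded {x | ∃ w, (M (x, w)).PosSemidef})
    (hne : {x | ∃ w, (M (x, w)).PosSemidef}.Nonempty) {a : ℝ} {y : E} :
    (a, y) ∈ homogenizedCone {x | ∃ w, (M (x, w)).PosSemidef} ↔
      0 ≤ a ∧ ∃ w, (affineHomogenization M (a, y, w)).PosSemidef := by
  refine and_congr_right fun ha => ?_
  rcases ha.eq_or_lt with rfl | ha
  · simp only [zero_smul_set hne, Set.mem_zero, affineHomogenization_zero_left]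
    refine ⟨?_, fun ⟨w, hw⟩ => eq_zero_of_linear_posSemidef hb hne hw⟩
    rintro rfl
    exact ⟨0, (map_zero M.linear).symm ▸ Matrix.PosSemidef.zero⟩
  · constructor
    · rintro ⟨x, ⟨w, hw⟩, hxy⟩
      obtain rfl : a • x = y := hxy
      exact ⟨a • w, (affineHomogenization_smul M a (x, w)).symm ▸ hw.smul ha.le⟩
    · rintro ⟨w, hw⟩
      have hrescale : M (a⁻¹ • y, a⁻¹ • w) = a⁻¹ • affineHomogenization M (a, y, w) := by
        rw [eq_inv_smul_iff₀ ha.ne', ← affineHomogenization_smul, ← Prod.smul_mk,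
          smul_inv_smul₀ ha.ne']
      exact ⟨a⁻¹ • y, ⟨a⁻¹ • w, hrescale ▸ hw.smul (inv_nonneg.2 ha.le)⟩, smul_inv_smul₀ ha.ne' y⟩

end Pencil

namespace IsSpectrahedralShadow

theorem homogenizedCone {S : Set E} (hS : IsSpectrahedralShadow S) (hb : Bornology.IsBounded S)
    (hne : S.Nonempty) : IsSpectrahedralShadow (homogenizedCone S) := by
  obtain ⟨N, d, M, hM, rfl⟩ := hS
  have hsymm (p : (ℝ × E) × (Fin N → ℝ)) :
      (affineHomogenization M (p.1.1, p.1.2, p.2)).IsSymm :=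
    ((hM 0).smul p.1.1).add (isSymm_linear_of_forall_isSymm hM _)
  convert (isSpectrahedralShadow_halfSpace (AffineMap.fst : ℝ × E →ᵃ[ℝ] ℝ)).inter
    (isSpectrahedralShadow_setOf_exists_posSemidef (affineHomogenization M ∘ₗ
      (LinearEquiv.prodAssoc ℝ ℝ E (Fin N → ℝ)).toLinearMap).toAffineMap hsymm) using 1
  ext ⟨a, y⟩
  exact mem_homogenizedCone_iff_exists_posSemidef hb hne

theorem convexHull_union [FiniteDimensional ℝ E] {S T : Set E} (hS : IsSpectrahedralShadow S)
    (hT : IsSpectrahedralShadow T) (bS : Bornology.IsBounded S) (bT : Bornology.IsBounded T) :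
    IsSpectrahedralShadow (convexHull ℝ (S ∪ T)) := by
  rcases S.eq_empty_or_nonempty with rfl | nS
  · rwa [empty_union, hT.convex.convexHull_eq]
  rcases T.eq_empty_or_nonempty with rfl | nT
  · rwa [union_empty, hS.convex.convexHull_eq]
  rw [hS.convex.convexHull_union hT.convex nS nT, convexJoin_eq_image_fst_homogenizedCone]
  let complement : E × ℝ × E →ᵃ[ℝ] ℝ × E :=
    (AffineMap.const ℝ _ (1 : ℝ) - AffineMap.fst.comp AffineMap.snd).prod
      (AffineMap.fst - AffineMap.snd.comp AffineMap.snd)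
  exact (((hS.homogenizedCone bS nS).preimage AffineMap.snd).inter
    ((hT.homogenizedCone bT nT).preimage complement)).image_fst

theorem convexHull_biUnion [FiniteDimensional ℝ E] {ι : Type*} (t : Finset ι) {S : ι → Set E}
    (hS : ∀ i ∈ t, IsSpectrahedralShadow (convexHull ℝ (S i)))
    (hb : ∀ i ∈ t, Bornology.IsBounded (S i)) :
    IsSpectrahedralShadow (convexHull ℝ (⋃ i ∈ t, S i)) := by
  classical
  induction t using Finset.induction_on with
  | empty => simpa using isSpectrahedralShadow_empty
  | insert i s _ ih =>
    rw [Finset.forall_mem_insert] at hS hb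
    rw [Finset.set_biUnion_insert, ← convexHull_convexHull_union_left,
      ← convexHull_convexHull_union_right]
    exact hS.1.convexHull_union (ih hS.2 hb.2) (isBounded_convexHull.2 hb.1)
      (isBounded_convexHull.2 ((Bornology.isBounded_biUnion_finset s).2 hb.2))

end IsSpectrahedralShadow

end Normed

theorem convexHull_eq_biUnion_image_stdSimplex {E : Type*} [AddCommGroup E] [Module ℝ E]
    [FiniteDimensional ℝ E] (S : Set E) :
    convexHull ℝ S = ⋃ k ∈ Finset.range (Module.finrank ℝ E + 2),
      (fun p : (Fin k → ℝ) × (Fin k → E) => ∑ i, p.1 i • p.2 i) ''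
        (stdSimplex ℝ (Fin k) ×ˢ univ.pi fun _ => S) := by
  refine Subset.antisymm (fun x hx => ?_) (iUnion₂_subset fun k _ => ?_)
  · obtain ⟨ι, _, z, w, hz, hind, hw, hw_one, rfl⟩ := eq_pos_convex_span_of_mem_convexHull hx
    let e := Fintype.equivFin ι
    have hcard : Fintype.card ι < Module.finrank ℝ E + 2 := by
      have := hind.card_le_finrank_succ
      have := Submodule.finrank_le (vectorSpan ℝ (range z))
      lia
    refine mem_biUnion (Finset.mem_coe.2 (Finset.mem_range.2 hcard))
      ⟨(w ∘ e.symm, z ∘ e.symm), ⟨⟨fun i => (hw _).le, ?_⟩, fun i _ => hz (mem_range_self _)⟩,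
        e.symm.sum_comp fun i => w i • z i⟩
    rw [← hw_one]
    exact e.symm.sum_comp w
  · rintro _ ⟨⟨w, z⟩, ⟨⟨hw, hw_one⟩, hz⟩, rfl⟩
    exact (convex_convexHull ℝ S).sum_mem (fun i _ => hw i) hw_one
      fun i _ => subset_convexHull ℝ S (hz i (mem_univ i))

theorem isCompact_convexHull {E : Type*} [AddCommGroup E] [Module ℝ E] [TopologicalSpace E]
    [ContinuousAdd E] [ContinuousSMul ℝ E] [FiniteDimensional ℝ E] {S : Set E} (hS : IsCompact S) :
    IsCompact (convexHull ℝ S) := by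
  rw [convexHull_eq_biUnion_image_stdSimplex]
  exact Finset.isCompact_biUnion _ fun k _ =>
    ((isCompact_stdSimplex ℝ (Fin k)).prod (isCompact_univ_pi fun _ => hS)).image (by fun_prop)

section ConvexBoundary

variable {n : ℕ} {T : Set (Rn n)}

theorem mem_convexBoundary_iff {u : Rn n} :
    u ∈ convexBoundary T ↔ u ∈ T ∧ ∃ l : Rn n, ‖l‖ = 1 ∧ IsMinOn (inner ℝ l) T u := by
  simp [convexBoundary, isMinOn_iff, PiLp.inner_apply, mul_comm]

theorem isCompact_convexBoundary (hT : IsCompact T) : IsCompact (convexBoundary T) := by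
  have hclosed : IsClosed {p : Rn n × Rn n | IsMinOn (inner ℝ p.2) T p.1} := by
    simp only [isMinOn_iff, ofPred_forall]
    exact isClosed_biInter fun x _ => isClosed_le (by fun_prop) (by fun_prop)
  convert ((hT.prod (isCompact_sphere (0 : Rn n) 1)).inter_right hclosed).image continuous_fst
    using 1
  ext u
  simp [mem_convexBoundary_iff, and_assoc]

theorem exists_isMinOn_mem_convexBoundary (hT : IsCompact T) (hne : T.Nonempty) {l : Rn n}
    (hl : l ≠ 0) : ∃ u ∈ convexBoundary T, IsMinOn (inner ℝ l) T u := by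
  obtain ⟨u, hu, hmin⟩ := hT.exists_isMinOn hne (f := inner ℝ l) (by fun_prop)
  refine ⟨u, mem_convexBoundary_iff.2 ⟨hu, ‖l‖⁻¹ • l, norm_smul_inv_norm hl, ?_⟩, hmin⟩
  intro x hx
  simpa only [mem_ofPred_eq, real_inner_smul_left] using
    mul_le_mul_of_nonneg_left (hmin hx) (by positivity)

theorem convexHull_convexBoundary [Nontrivial (Rn n)] (hT : IsCompact T) :
    convexHull ℝ (convexBoundary T) = convexHull ℝ T := by
  refine (convexHull_mono (sep_subset _ _)).antisymm
    (convexHull_min (fun x hx => ?_) (convex_convexHull _ _))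
  by_contra hx'
  obtain ⟨f, c, hfx, hf⟩ := geometric_hahn_banach_point_closed (convex_convexHull ℝ _)
    (isCompact_convexHull (isCompact_convexBoundary hT)).isClosed hx'
  have hf' : ∀ u ∈ convexBoundary T, f x < f u :=
    fun u hu => hfx.trans (hf u (subset_convexHull ℝ _ hu))
  obtain ⟨l, rfl⟩ := (InnerProductSpace.toDual ℝ (Rn n)).surjective f
  rcases eq_or_ne l 0 with rfl | hl
  · obtain ⟨l', hl'⟩ := exists_ne (0 : Rn n)
    obtain ⟨u, hu, -⟩ := exists_isMinOn_mem_convexBoundary hT ⟨x, hx⟩ hl'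
    simpa using hf' u hu
  · obtain ⟨u, hu, hmin⟩ := exists_isMinOn_mem_convexBoundary hT ⟨x, hx⟩ hl
    exact (hf' u hu).not_ge (hmin hx)

end ConvexBoundary

theorem isSDPRepresentable_convexHull_of_local_general {n : ℕ} (T : Set (Rn n))
    (hcpt : IsCompact T)
    (h : ∀ u ∈ convexBoundary T, ∃ V ∈ 𝓝 u, IsSDPRepresentable (convexHull ℝ (T ∩ V))) :
    IsSDPRepresentable (convexHull ℝ T) := by
  simp only [isSDPRepresentable_iff_isSpectrahedralShadow] at h ⊢
  rcases subsingleton_or_nontrivial (Rn n) with _ | _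
  · rcases (convexHull ℝ T).eq_empty_or_nonempty with hT | hT
    · exact hT ▸ isSpectrahedralShadow_empty
    · exact Subsingleton.eq_univ_of_nonempty hT ▸ isSpectrahedralShadow_univ
  choose! V hV hrep using h
  obtain ⟨t, ht, hcover⟩ := (isCompact_convexBoundary hcpt).elim_nhds_subcover V hV
  have hpieces : convexBoundary T ⊆ ⋃ u ∈ t, T ∩ V u := by
    rw [← inter_iUnion₂]
    exact subset_inter (sep_subset _ _) hcover
  have hhull : convexHull ℝ T = convexHull ℝ (⋃ u ∈ t, T ∩ V u) :=
    ((convexHull_convexBoundary hcpt).ge.trans (convexHull_mono hpieces)).antisymm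
      (convexHull_mono (iUnion₂_subset fun _ _ => inter_subset_left))
  rw [hhull]
  exact .convexHull_biUnion t (fun u hu => hrep u (ht u hu))
    fun u _ => hcpt.isBounded.subset inter_subset_left

/-- if near every point of the convex boundary some
`conv(T ∩ B̄(u, δ))` is SDP representable, then `conv(T)` is. -/
theorem isSDPRepresentable_convexHull_of_local {n : ℕ} (T : Set (Rn n))
    (hcpt : IsCompact T)
    (h : ∀ u ∈ convexBoundary T, ∃ δ > 0,
      IsSDPRepresentable (convexHull ℝ (T ∩ closedBall u δ))) :
    IsSDPRepresentable (convexHull ℝ T) :=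
  isSDPRepresentable_convexHull_of_local_general T hcpt fun u hu =>
    let ⟨δ, hδ, hrep⟩ := h u hu
    ⟨closedBall u δ, closedBall_mem_nhds u hδ, hrep⟩
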